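/- Assume m₁ > 0, m₂ > 0, 1/2 < α₁ < 1, 1/2 < α₂ < 1, α₁ ≤ 1 − m₂/m, α₂ ≤ 1 − m₁/m, and m ≥ 3(m₁ + m₂). If 0 < x₂ < m₂ and a₁(x₂) ≤ 0, then Q₁(x₁, x₂) ≠ 0 for every x₁ with 0 < x₁ < m₁. -/

import Mathlib

/-! For fixed `x2 ∈ (0, m2)` the claim follows from signs: `b1 < 0` and `c1 < 0`, so if also
`a1f ≤ 0` then every coefficient of `Q1` in `x1` is nonpositive, with a negative constant term,
and `Q1 < 0` for `x1 > 0`. The sign of `b1` uses only that `m` dominates `m1 + m2`; that of `c1`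
needs in addition `a2 > 1/2`, `m1 ≤ (1 - a2) m` and `m2 ≤ (1 - a1) m`. -/

/-- The coefficient `c₁(x₂)` (constant term of `Q₁` as a polynomial in `x₁`)
from the two-pool DPBW game. -/
def c1 (m m1 m2 a1 a2 x2 : ℝ) : ℝ :=
  a2 * m2 * x2 ^ 3
    + (-(m * a2 * m2) + a2 * m1 * m2 - a1 * a2 * m1 * m2 + m2 ^ 2 - a2 * m2 ^ 2) * x2 ^ 2
    + (-(m * a2 * m1 * m2) + m * a1 * a2 * m1 * m2 - m * m2 ^ 2 + m * a2 * m2 ^ 2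
        + 2 * m1 * m2 ^ 2 - a2 * m1 * m2 ^ 2) * x2
    + (a2 - 1) * m * m1 * m2 ^ 2 + m1 ^ 2 * m2 ^ 2

/-- The coefficient `b₁(x₂)` from the two-pool DPBW game. -/
def b1 (m m1 m2 a1 a2 x2 : ℝ) : ℝ :=
  2 * m2 * x2 ^ 2 + (-(2 * m * m2) + 4 * m1 * m2 - 2 * a1 * a2 * m1 * m2) * x2
    - 2 * m * m1 * m2 + 2 * m1 ^ 2 * m2

/-- The coefficient `a₁(x₂)` from the two-pool DPBW game. -/
def a1f (m m1 m2 a1 a2 x2 : ℝ) : ℝ :=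
  (a1 * a2 ^ 2 - a1 * a2 - a2 + 1) * x2 ^ 2
    + (-(a1 * a2 ^ 2 * m2) + a1 * a2 * m - a1 * a2 * m1 - a2 * m1 + a1 * a2 * m2
        + a2 * m2 - m + 2 * m1) * x2
    + a2 * m1 * m2 + m1 ^ 2 - m * m1

/-- The polynomial `Q₁(x₁, x₂) = a₁(x₂)x₁² + b₁(x₂)x₁ + c₁(x₂)` from the
two-pool DPBW game. -/
def Q1 (m m1 m2 a1 a2 x1 x2 : ℝ) : ℝ :=
  a1f m m1 m2 a1 a2 x2 * x1 ^ 2 + b1 m m1 m2 a1 a2 x2 * x1 + c1 m m1 m2 a1 a2 x2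

/-- The symmetric polynomial `Q₂(x₁, x₂)`, obtained from `Q₁` by exchanging
the roles of `(m₁, α₁)` and `(m₂, α₂)` (and of `x₁` and `x₂`). -/
def Q2 (m m1 m2 a1 a2 x1 x2 : ℝ) : ℝ :=
  Q1 m m2 m1 a2 a1 x2 x1

theorem b1_neg {m m1 m2 a1 a2 x2 : ℝ} (hm1 : 0 < m1) (hm2 : 0 < m2)
    (ha1 : 0 < a1) (ha2 : 0 < a2) (hm : 3 * (m1 + m2) ≤ m) (h0 : 0 < x2) (h1 : x2 < m2) :
    b1 m m1 m2 a1 a2 x2 < 0 := by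
  have e : b1 m m1 m2 a1 a2 x2
      = -(2 * m2 * (x2 * (m - x2) + m1 * (m - m1 - 2 * x2) + a1 * a2 * m1 * x2)) := by
    unfold b1; ring
  have p1 : 0 < m - x2 := by linarith
  have p2 : 0 < m - m1 - 2 * x2 := by linarith
  rw [e, neg_lt_zero]
  positivity

/-- Each coefficient of `c1 / m2` is controlled separately: the constant one is `≤ 0`, the linear
one is at most `m1 m2 (1 - 2 a2) < 0`, and the quadratic and cubic ones together are negative. -/
theorem c1_neg {m m1 m2 a1 a2 x2 : ℝ} (hm1 : 0 < m1) (hm2 : 0 < m2)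
    (ha1 : 0 < a1) (ha2 : 1 / 2 < a2)
    (hA1 : m2 ≤ (1 - a1) * m) (hA2 : m1 ≤ (1 - a2) * m)
    (hm : 3 * (m1 + m2) ≤ m) (h0 : 0 < x2) (h1 : x2 < m2) :
    c1 m m1 m2 a1 a2 x2 < 0 := by
  have p0 : 0 ≤ (1 - a2) * m - m1 := by linarith
  have p1 : 0 ≤ (1 - a1) * m - m2 := by linarith
  have q1 : 0 < m1 * m2 * (2 * a2 - 1) + a2 * m1 * ((1 - a1) * m - m2)
      + m2 * ((1 - a2) * m - m1) := by
    have : 0 < 2 * a2 - 1 := by linarith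
    positivity
  have q2 : 0 < a2 * (m - x2 - m1 - 2 * m2) + a1 * a2 * m1 + (3 * a2 - 1) * m2 := by
    have h2 : 0 < m - x2 - m1 - 2 * m2 := by linarith
    have h3 : 0 < 3 * a2 - 1 := by linarith
    positivity
  have e : c1 m m1 m2 a1 a2 x2
      = -(m2 * (x2 ^ 2 * (a2 * (m - x2 - m1 - 2 * m2) + a1 * a2 * m1 + (3 * a2 - 1) * m2)
        + x2 * (m1 * m2 * (2 * a2 - 1) + a2 * m1 * ((1 - a1) * m - m2)
          + m2 * ((1 - a2) * m - m1))
        + m1 * m2 * ((1 - a2) * m - m1))) := by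
    unfold c1; ring
  rw [e, neg_lt_zero]
  positivity

/-- **Claim 3 of the DPBW paper.** If `a₁(x₂) ≤ 0` at some interior `x₂`, then
`Q₁(·, x₂)` has no zero in `(0, m₁)`. -/
theorem Q1_ne_zero_of_a1_nonpos
    (m m1 m2 a1 a2 : ℝ)
    (hm1 : 0 < m1) (hm2 : 0 < m2)
    (ha1 : 1 / 2 < a1) (ha1' : a1 < 1)
    (ha2 : 1 / 2 < a2) (ha2' : a2 < 1)
    (hA1 : a1 ≤ 1 - m2 / m) (hA2 : a2 ≤ 1 - m1 / m)
    (hm : 3 * (m1 + m2) ≤ m) :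
    ∀ x2 : ℝ, 0 < x2 → x2 < m2 → a1f m m1 m2 a1 a2 x2 ≤ 0 →
      ∀ x1 : ℝ, 0 < x1 → x1 < m1 → Q1 m m1 m2 a1 a2 x1 x2 ≠ 0 := by
  intro x2 h0 h1 ha x1 hx0 _
  have hmpos : 0 < m := by linarith
  have hB1 : m2 ≤ (1 - a1) * m := (div_le_iff₀ hmpos).1 (by linarith)
  have hB2 : m1 ≤ (1 - a2) * m := (div_le_iff₀ hmpos).1 (by linarith)
  have hb := b1_neg (a1 := a1) (a2 := a2) hm1 hm2 (by linarith) (by linarith) hm h0 h1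
  have hc := c1_neg (a1 := a1) hm1 hm2 (by linarith) ha2 hB1 hB2 hm h0 h1
  have t1 := mul_nonpos_of_nonpos_of_nonneg ha (sq_nonneg x1)
  have t2 := mul_neg_of_neg_of_pos hb hx0
  apply ne_of_lt
  unfold Q1
  linarith
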